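/- Let t, r, k be finite types, let G : Matrix t r ℝ, and let V : Matrix t k ℝ satisfy Vᵀ · V = 1. Then for every matrix N : Matrix k r ℝ, ‖G − V · Vᵀ · G‖_F ≤ ‖G − V · N‖_F, i.e., V·Vᵀ·G is a best approximation of G in Frobenius norm among all matrices whose columns lie in the range of V. -/

import Mathlib

open Matrix

/-- The Frobenius norm of a real matrix: `(Σᵢⱼ M i j ^ 2)^{1/2}`. -/
noncomputable def frobNorm {m n : Type*} [Fintype m] [Fintype n]
    (M : Matrix m n ℝ) : ℝ :=
  Real.sqrt (∑ i, ∑ j, (M i j) ^ 2)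

section FrobeniusNorm

variable {m n : Type*} [Fintype m] [Fintype n]

theorem frobNorm_nonneg (M : Matrix m n ℝ) : 0 ≤ frobNorm M :=
  Real.sqrt_nonneg _

theorem frobNorm_sq (M : Matrix m n ℝ) : frobNorm M ^ 2 = (Mᵀ * M).trace := by
  have entries_nonneg : 0 ≤ ∑ i, ∑ j, M i j ^ 2 := by positivity
  rw [frobNorm, Real.sq_sqrt entries_nonneg, trace_mul_comm, ← sum_hadamard_eq]
  simp only [hadamard_apply, sq]

theorem frobNorm_add_sq_of_trace_transpose_mul_eq_zero {M N : Matrix m n ℝ}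
    (h : (Mᵀ * N).trace = 0) :
    frobNorm (M + N) ^ 2 = frobNorm M ^ 2 + frobNorm N ^ 2 := by
  have h_symm : (Nᵀ * M).trace = 0 := by
    rw [← trace_transpose, transpose_mul, transpose_transpose, h]
  simp only [frobNorm_sq, transpose_add, Matrix.add_mul, Matrix.mul_add, trace_add, h, h_symm,
    add_zero, zero_add]

end FrobeniusNorm

section LeastSquares

variable {t r k : Type*} [Fintype t] [Fintype r] [Fintype k]
  {G : Matrix t r ℝ} {A : Matrix t k ℝ} {X : Matrix k r ℝ}

theorem frobNorm_sub_mul_sq_of_normal_equations (hX : Aᵀ * (G - A * X) = 0) (N : Matrix k r ℝ) :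
    frobNorm (G - A * N) ^ 2 = frobNorm (G - A * X) ^ 2 + frobNorm (A * (X - N)) ^ 2 := by
  have residual_orthogonal : ((G - A * X)ᵀ * (A * (X - N))).trace = 0 := by
    rw [← trace_transpose, transpose_mul, transpose_transpose, transpose_mul, Matrix.mul_assoc,
      hX, Matrix.mul_zero, trace_zero]
  rw [← frobNorm_add_sq_of_trace_transpose_mul_eq_zero residual_orthogonal, Matrix.mul_sub,
    sub_add_sub_cancel]

theorem frobNorm_sub_mul_le_of_normal_equations (hX : Aᵀ * (G - A * X) = 0) (N : Matrix k r ℝ) :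
    frobNorm (G - A * X) ≤ frobNorm (G - A * N) := by
  refine le_of_sq_le_sq ?_ (frobNorm_nonneg _)
  rw [frobNorm_sub_mul_sq_of_normal_equations hX N]
  exact le_add_of_nonneg_right (sq_nonneg _)

end LeastSquares

/-- `V * Vᵀ * V = V` says that `V` is a partial isometry, which is exactly when `V * Vᵀ` is the
orthogonal projection onto the range of `V`. -/
theorem projection_best_approximation_general
    {t r k : Type*} [Fintype t] [Fintype r] [Fintype k]
    (G : Matrix t r ℝ) (V : Matrix t k ℝ) (hV : V * Vᵀ * V = V) (N : Matrix k r ℝ) :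
    frobNorm (G - V * Vᵀ * G) ≤ frobNorm (G - V * N) := by
  have transpose_mul_proj : Vᵀ * (V * Vᵀ) = Vᵀ := by
    simpa only [transpose_mul, transpose_transpose] using congrArg transpose hV
  have normal_equations : Vᵀ * (G - V * (Vᵀ * G)) = 0 := by
    rw [Matrix.mul_sub, ← Matrix.mul_assoc V, ← Matrix.mul_assoc, transpose_mul_proj, sub_self]
  rw [Matrix.mul_assoc]
  exact frobNorm_sub_mul_le_of_normal_equations normal_equations N

theorem projection_best_approximation
    {t r k : Type*} [Fintype t] [Fintype r] [Fintype k] [DecidableEq k]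
    (G : Matrix t r ℝ) (V : Matrix t k ℝ) (hV : Vᵀ * V = 1) :
    ∀ N : Matrix k r ℝ, frobNorm (G - V * Vᵀ * G) ≤ frobNorm (G - V * N) :=
  projection_best_approximation_general G V (by rw [Matrix.mul_assoc, hV, Matrix.mul_one])
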